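/- For test functions φ ∈ S(ℝ) (Schwartz functions), the quadratic form ∬_{ℝ²} φ(t)φ(s) max(log(T/|t-s|),0) ds dt equals (1/π) ∫_ℝ (Si(2π|ξ|T)/|ξ|) |φ̂(ξ)|² dξ, where Si(x) = ∫_0^x sin(t)/t dt and φ̂ is the Fourier transform of φ. -/

import Mathlib

open MeasureTheory Real intervalIntegral

/-- Fourier transform with convention `f̂(ξ) = ∫ e^{-2πiξx} f(x) dx`. -/
noncomputable def fourierHat (f : ℝ → ℝ) (ξ : ℝ) : ℂ :=
  ∫ x : ℝ, Complex.exp (-2 * Real.pi * Complex.I * ξ * x) * (f x : ℂ)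

/-- The sine integral `Si(x) = ∫_0^x sin t / t dt`. -/
noncomputable def Si (x : ℝ) : ℝ := ∫ t in (0 : ℝ)..x, Real.sin t / t

/-! With `K x = log⁺ (T / x)`, an even integrable function, the quadratic form is `⟪φ, φ ⋆ K⟫`,
which Parseval's identity and the convolution theorem turn into `∫ K̂ |φ̂|²`. Since `K` is even,
`K̂` is a cosine transform, and by scaling it reduces to `∫ x in 0..1, log x * cos (a * x)`.
Integrating by parts leaves `-(1 / a) * ∫ x in 0..1, sin (a * x) / x = -Si a / a`. -/

open scoped FourierTransform Convolution ComplexConjugate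

section SineIntegral

lemma Si_eq_integral_sinc (x : ℝ) : Si x = ∫ t in (0 : ℝ)..x, sinc t := by
  refine integral_congr_ae ?_
  filter_upwards [Measure.ae_ne volume 0] with t ht _
  exact (sinc_of_ne_zero ht).symm

lemma hasDerivAt_Si (x : ℝ) : HasDerivAt Si (sinc x) x := by
  rw [funext Si_eq_integral_sinc]
  exact (continuous_sinc.integral_hasStrictDerivAt 0 x).hasDerivAt

lemma continuous_Si : Continuous Si :=
  continuous_iff_continuousAt.mpr fun x => (hasDerivAt_Si x).continuousAt

lemma continuous_log_mul_sin (a : ℝ) : Continuous fun x => log x * sin (a * x) := by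
  have h_sinc (x : ℝ) : log x * sin (a * x) = x * log x * (a * sinc (a * x)) := by
    rcases eq_or_ne (a * x) 0 with h | h
    · rcases mul_eq_zero.mp h with rfl | rfl <;> simp
    · rw [sinc_of_ne_zero h]
      field_simp [left_ne_zero_of_mul h, right_ne_zero_of_mul h]
  simp_rw [h_sinc]
  have := continuous_sinc
  exact continuous_mul_log.mul (by fun_prop)

lemma hasDerivAt_log_mul_sin_sub_Si (a : ℝ) {x : ℝ} (hx : x ≠ 0) :
    HasDerivAt (fun x => log x * sin (a * x) - Si (a * x)) (a * (log x * cos (a * x))) x := by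
  have h_lin : HasDerivAt (fun x => a * x) a x := hasDerivAt_const_mul a
  have h_log_sin := (hasDerivAt_log hx).mul h_lin.sin
  have h_Si := (hasDerivAt_Si (a * x)).comp x h_lin
  have h_sinc : sinc (a * x) * a = x⁻¹ * sin (a * x) := by
    rcases eq_or_ne a 0 with rfl | ha
    · simp
    · rw [sinc_of_ne_zero (mul_ne_zero ha hx)]
      field_simp
  refine (h_log_sin.sub h_Si).congr_deriv ?_
  rw [h_sinc]
  ring

lemma integral_log_mul_cos {a : ℝ} (ha : a ≠ 0) (b : ℝ) :
    ∫ x in (0 : ℝ)..b, log x * cos (a * x) = (log b * sin (a * b) - Si (a * b)) / a := by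
  have h_cont : Continuous fun x => log x * sin (a * x) - Si (a * x) :=
    (continuous_log_mul_sin a).sub (continuous_Si.comp (by fun_prop))
  have h_int : IntervalIntegrable (fun x => a * (log x * cos (a * x))) volume 0 b :=
    (intervalIntegrable_log'.mul_continuousOn (by fun_prop)).const_mul a
  have h_ftc := integral_eq_of_hasDerivAt_off_countable _ _ (Set.countable_singleton 0)
    h_cont.continuousOn (fun x hx => hasDerivAt_log_mul_sin_sub_Si a hx.2) h_int
  rw [intervalIntegral.integral_const_mul] at h_ftc
  rw [eq_div_iff ha, mul_comm, h_ftc]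
  simp [Si]

end SineIntegral

section TruncatedLogarithm

-- The point `0` is covered because `log 0 = 0` and `0⁻¹ = 0`.
lemma posLog_inv_eq_indicator :
    (fun x : ℝ => log⁺ x⁻¹) = (Set.Icc (-1) 1).indicator fun x => -log x := by
  funext x
  rcases eq_or_ne x 0 with rfl | hx
  · simp
  by_cases hx_mem : x ∈ Set.Icc (-1) 1
  · rw [Set.indicator_of_mem hx_mem, posLog_eq_log, log_inv]
    rw [abs_inv]
    exact (one_le_inv₀ (abs_pos.mpr hx)).mpr (abs_le.mpr hx_mem)
  · rw [Set.indicator_of_notMem hx_mem, posLog_eq_zero_iff, abs_inv]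
    exact inv_le_one_of_one_le₀ (not_le.mp (mt abs_le.mp hx_mem)).le

lemma integrable_posLog_inv : Integrable fun x : ℝ => log⁺ x⁻¹ := by
  rw [posLog_inv_eq_indicator, integrable_indicator_iff measurableSet_Icc,
    ← intervalIntegrable_iff_integrableOn_Icc_of_le (by norm_num)]
  exact intervalIntegrable_log'.neg

lemma integrable_posLog_div (T : ℝ) : Integrable fun x => log⁺ (T / x) := by
  rcases eq_or_ne T 0 with rfl | hT
  · simp
  · simpa only [inv_div] using integrable_posLog_inv.comp_div hT

lemma integral_posLog_inv_mul_cos {a : ℝ} (ha : a ≠ 0) :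
    ∫ x, log⁺ x⁻¹ * cos (a * x) = 2 * Si a / a := by
  have h_even (x : ℝ) : log⁺ |x|⁻¹ * cos (a * |x|) = log⁺ x⁻¹ * cos (a * x) := by
    rcases abs_choice x with h | h <;> simp [h, inv_neg]
  calc ∫ x, log⁺ x⁻¹ * cos (a * x)
      = 2 * ∫ x in Set.Ioi 0, log⁺ x⁻¹ * cos (a * x) := by
        rw [← integral_comp_abs (f := fun x => log⁺ x⁻¹ * cos (a * x))]
        simp_rw [h_even]
    _ = 2 * ∫ x in (0 : ℝ)..1, -(log x * cos (a * x)) := by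
        have h_inter : Set.Ioi (0 : ℝ) ∩ Set.Icc (-1) 1 = Set.Ioc 0 1 := by grind
        have h_indicator (x : ℝ) : log⁺ x⁻¹ * cos (a * x) =
            (Set.Icc (-1) 1).indicator (fun x => -(log x * cos (a * x))) x := by
          rw [congrFun posLog_inv_eq_indicator x]
          simp only [← neg_mul, Set.indicator_mul_left]
        simp_rw [h_indicator]
        rw [setIntegral_indicator measurableSet_Icc, h_inter, integral_of_le zero_le_one]
    _ = 2 * Si a / a := by
        rw [intervalIntegral.integral_neg, integral_log_mul_cos ha]
        simp only [log_one, mul_one]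
        ring

lemma integral_posLog_div_mul_cos {T a : ℝ} (hT : 0 < T) (ha : a ≠ 0) :
    ∫ x, log⁺ (T / x) * cos (a * x) = 2 * Si (a * T) / a := by
  calc ∫ x, log⁺ (T / x) * cos (a * x)
      = ∫ x, log⁺ (x / T)⁻¹ * cos (a * T * (x / T)) := by
        congr! 3 with x
        · rw [inv_div]
        · field_simp
    _ = T * (2 * Si (a * T) / (a * T)) := by
        rw [Measure.integral_comp_div (fun x => log⁺ x⁻¹ * cos (a * T * x)),
          integral_posLog_inv_mul_cos (mul_ne_zero ha hT.ne'), abs_of_pos hT, smul_eq_mul]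
    _ = 2 * Si (a * T) / a := by field_simp

end TruncatedLogarithm

section Fourier

variable {V : Type*} [NormedAddCommGroup V] [InnerProductSpace ℝ V] [FiniteDimensional ℝ V]
  [MeasurableSpace V] [BorelSpace V]

lemma fourierChar_add_fourierChar_neg (x : ℝ) : (𝐞 x + 𝐞 (-x) : ℂ) = 2 * cos (2 * π * x) := by
  rw [fourierChar_apply, fourierChar_apply, Complex.ofReal_cos, Complex.two_cos, mul_neg,
    Complex.ofReal_neg]

lemma fourier_eq_integral_cos_smul_of_even {E : Type*} [NormedAddCommGroup E] [NormedSpace ℂ E]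
    {f : V → E} (hf : Integrable f) (hf_even : f.Even) (ξ : V) :
    𝓕 f ξ = ∫ x, cos (2 * π * inner ℝ x ξ) • f x := by
  have h_inv : 𝓕⁻ f ξ = 𝓕 f ξ := by
    rw [fourierInv_eq_fourier_comp_neg, funext hf_even]
  have h_int (η : V) : Integrable fun x => 𝐞 (-inner ℝ x η) • f x :=
    (fourierIntegral_convergent_iff η).mpr hf
  have h_cos (x : V) : 𝐞 (-inner ℝ x ξ) • f x + 𝐞 (inner ℝ x ξ) • f x =
      (2 : ℂ) • cos (2 * π * inner ℝ x ξ) • f x := by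
    rw [Circle.smul_def, Circle.smul_def, ← add_smul, add_comm, fourierChar_add_fourierChar_neg,
      mul_smul, Complex.coe_smul]
  have h_two : (2 : ℂ) • 𝓕 f ξ = (2 : ℂ) • ∫ x, cos (2 * π * inner ℝ x ξ) • f x := by
    calc (2 : ℂ) • 𝓕 f ξ = 𝓕 f ξ + 𝓕⁻ f ξ := by rw [h_inv, two_smul]
      _ = ∫ x, (𝐞 (-inner ℝ x ξ) • f x + 𝐞 (inner ℝ x ξ) • f x) := by
        rw [fourier_eq, fourierInv_eq, integral_add (h_int ξ) (by simpa using h_int (-ξ))]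
      _ = (2 : ℂ) • ∫ x, cos (2 * π * inner ℝ x ξ) • f x := by
        simp_rw [h_cos, MeasureTheory.integral_smul]
  exact smul_right_injective E two_ne_zero h_two

theorem integral_inner_fourier_fourier {E : Type*} [NormedAddCommGroup E] [InnerProductSpace ℂ E]
    [CompleteSpace E] {f g : V → E} (hf_cont : Continuous f)
    (hf : Integrable f) (hf_fourier : Integrable (𝓕 f)) (hg : Integrable g) :
    ∫ ξ, inner ℂ (𝓕 f ξ) (𝓕 g ξ) = ∫ x, inner ℂ (f x) (g x) := by
  have h_adjoint : ∫ x, inner ℂ (𝓕⁻ (𝓕 f) x) (g x) = ∫ ξ, inner ℂ (𝓕 f ξ) (𝓕 g ξ) := by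
    have h_flip : -(-innerₗ V).flip = innerₗ V := by
      ext x y
      simp [real_inner_comm]
    simpa [h_flip] using! VectorFourier.integral_sesq_fourierIntegral_eq_neg_flip (innerSL ℂ)
      (L := -innerₗ V) continuous_fourierChar continuous_inner.neg hf_fourier hg
  rw [← h_adjoint, hf_cont.fourierInv_fourier_eq hf hf_fourier]

theorem integral_integral_conj_mul_mul_sub {f g k : V → ℂ} (hf_cont : Continuous f)
    (hf : Integrable f) (hf_fourier : Integrable (𝓕 f)) (hg : Integrable g) (hk : Integrable k) :
    ∫ t, ∫ s, conj (f t) * g s * k (t - s) = ∫ ξ, conj (𝓕 f ξ) * 𝓕 g ξ * 𝓕 k ξ := by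
  calc ∫ t, ∫ s, conj (f t) * g s * k (t - s)
      = ∫ t, inner ℂ (f t) ((g ⋆[.mul ℂ ℂ] k) t) := by
        simp_rw [mul_assoc, MeasureTheory.integral_const_mul, RCLike.inner_apply', convolution_def,
          ContinuousLinearMap.mul_apply']
    _ = ∫ ξ, inner ℂ (𝓕 f ξ) (𝓕 (g ⋆[.mul ℂ ℂ] k) ξ) :=
        (integral_inner_fourier_fourier hf_cont hf hf_fourier (hg.integrable_convolution _ hk)).symm
    _ = ∫ ξ, conj (𝓕 f ξ) * 𝓕 g ξ * 𝓕 k ξ := by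
        simp_rw [fourier_mul_convolution_eq hg hk, RCLike.inner_apply', mul_assoc]

lemma fourier_posLog_div {T ξ : ℝ} (hT : 0 < T) (hξ : ξ ≠ 0) :
    𝓕 (fun x : ℝ => (log⁺ (T / x) : ℂ)) ξ = (1 / π * (Si (2 * π * |ξ| * T) / |ξ|) : ℝ) := by
  have h_even : Function.Even fun x : ℝ => (log⁺ (T / x) : ℂ) := fun x => by
    simp only [div_neg, posLog_neg]
  have h_cos (x : ℝ) : cos (2 * π * inner ℝ x ξ) = cos (2 * π * |ξ| * x) := by
    rcases abs_choice ξ with h | h <;> simp [h, mul_assoc]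
  rw [fourier_eq_integral_cos_smul_of_even (integrable_posLog_div T).ofReal h_even]
  simp_rw [Complex.real_smul, ← Complex.ofReal_mul, mul_comm (cos _), h_cos]
  rw [integral_complex_ofReal, integral_posLog_div_mul_cos hT (by positivity)]
  congr 1
  field_simp

lemma fourierHat_eq_fourier (f : ℝ → ℝ) : fourierHat f = 𝓕 (fun x => (f x : ℂ)) := by
  funext ξ
  rw [fourier_real_eq_integral_exp_smul, fourierHat]
  congr! 4 with x
  push_cast
  ring

lemma integrable_fourierHat_schwartz (φ : SchwartzMap ℝ ℝ) : Integrable (fourierHat φ) := by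
  rw [fourierHat_eq_fourier]
  exact (𝓕 (SchwartzMap.postcompCLM Complex.ofRealCLM φ)).integrable

end Fourier

theorem parseval_logplus_kernel_general {T : ℝ} (hT : 0 < T) {f : ℝ → ℝ} (hf_cont : Continuous f)
    (hf : Integrable f) (hf_hat : Integrable (fourierHat f)) :
    ∫ t : ℝ, ∫ s : ℝ, f t * f s * max (log (T / |t - s|)) 0 =
      (1 / π) * ∫ ξ : ℝ, (Si (2 * π * |ξ| * T) / |ξ|) * ‖fourierHat f ξ‖ ^ 2 := by
  rw [fourierHat_eq_fourier] at hf_hat ⊢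
  have h_kernel (x : ℝ) : max (log (T / |x|)) 0 = log⁺ (T / x) := by
    rw [max_comm, ← posLog_apply, ← posLog_abs (T / x), abs_div, abs_of_pos hT]
  apply Complex.ofReal_injective
  calc ((∫ t, ∫ s, f t * f s * max (log (T / |t - s|)) 0 : ℝ) : ℂ)
      = ∫ t, ∫ s, conj (f t : ℂ) * f s * (log⁺ (T / (t - s)) : ℂ) := by
        simp_rw [h_kernel, ← integral_complex_ofReal, Complex.ofReal_mul, Complex.conj_ofReal]
    _ = ∫ ξ, conj (𝓕 (fun x => (f x : ℂ)) ξ) * 𝓕 (fun x => (f x : ℂ)) ξ *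
          𝓕 (fun x : ℝ => (log⁺ (T / x) : ℂ)) ξ :=
        integral_integral_conj_mul_mul_sub (k := fun x => (log⁺ (T / x) : ℂ)) (by fun_prop)
          hf.ofReal hf_hat hf.ofReal (integrable_posLog_div T).ofReal
    _ = ∫ ξ, ((1 / π * (Si (2 * π * |ξ| * T) / |ξ| * ‖𝓕 (fun x => (f x : ℂ)) ξ‖ ^ 2) : ℝ) : ℂ) := by
        refine integral_congr_ae ?_
        filter_upwards [Measure.ae_ne volume 0] with ξ hξ
        rw [fourier_posLog_div hT hξ, Complex.conj_mul']
        push_cast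
        ring
    _ = _ := by rw [integral_complex_ofReal, MeasureTheory.integral_const_mul]

theorem parseval_logplus_kernel (T : ℝ) (hT : 0 < T) (φ : SchwartzMap ℝ ℝ) :
    ∫ t : ℝ, ∫ s : ℝ, φ t * φ s * max (Real.log (T / |t - s|)) 0 =
      (1 / Real.pi) *
        ∫ ξ : ℝ, (Si (2 * Real.pi * |ξ| * T) / |ξ|) * ‖fourierHat (fun x => φ x) ξ‖ ^ 2 :=
  parseval_logplus_kernel_general hT φ.continuous φ.integrable (integrable_fourierHat_schwartz φ)
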